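/- If n is a strongly matchable positive integer and p is a prime with p not dividing n and p > 2τ(n), then pn is strongly matchable. -/

import Mathlib

/-!
Let `t = τ(n)`. Since `p ∤ n`, the divisors of `p * n` are the `2 * t` numbers in `D(n) ∪ p * D(n)`.
A progression of `2 * t < p` terms with coprime start and difference contains at most one multiple
of `p`, so one of its two halves of length `t` contains none. Each half is again a progression to
which strong matchability of `n` applies: the half without multiples of `p` is matched with
`p * D(n)`, the other one with `D(n)`.
-/

/-- A coprime matching from a finite set `A` of positive integers to a finite set `B`
is a bijection `ψ : A → B` with `gcd(a, ψ(a)) = 1` for every `a ∈ A`. -/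
def CoprimeMatching (A B : Finset ℕ) : Prop :=
  ∃ ψ : ℕ → ℕ, Set.BijOn ψ ↑A ↑B ∧ ∀ a ∈ A, Nat.gcd a (ψ a) = 1

/-- A positive integer `n` is strongly matchable if for every arithmetic progression
`{a, a+d, ..., a+(τ(n)-1)d}` of `τ(n)` positive integers with `gcd(a,d) = 1`, there is
a coprime matching from the set of divisors of `n` to it. -/
def StronglyMatchable (n : ℕ) : Prop :=
  ∀ a d : ℕ, 0 < a → 0 < d → Nat.gcd a d = 1 →
    CoprimeMatching n.divisors
      ((Finset.range n.divisors.card).image (fun i => a + i * d))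

namespace CoprimeMatching

variable {A A₁ A₂ B B₁ B₂ : Finset ℕ} {m : ℕ}

theorem union (h₁ : CoprimeMatching A₁ B₁) (h₂ : CoprimeMatching A₂ B₂)
    (hA : Disjoint A₁ A₂) (hB : Disjoint B₁ B₂) : CoprimeMatching (A₁ ∪ A₂) (B₁ ∪ B₂) := by
  obtain ⟨f, hf, hf_coprime⟩ := h₁
  obtain ⟨g, hg, hg_coprime⟩ := h₂
  have eq_f : ∀ x ∈ A₁, A₁.piecewise f g x = f x := fun x hx => A₁.piecewise_eq_of_mem f g hx
  have eq_g : ∀ x ∈ A₂, A₁.piecewise f g x = g x := fun x hx =>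
    A₁.piecewise_eq_of_notMem f g (Finset.disjoint_right.1 hA hx)
  have bij₁ : Set.BijOn (A₁.piecewise f g) A₁ B₁ := hf.congr fun x hx => (eq_f x hx).symm
  have bij₂ : Set.BijOn (A₁.piecewise f g) A₂ B₂ := hg.congr fun x hx => (eq_g x hx).symm
  have inj : Set.InjOn (A₁.piecewise f g) (A₁ ∪ A₂) :=
    (Set.injOn_union (Finset.disjoint_coe.2 hA)).2 ⟨bij₁.injOn, bij₂.injOn, fun _ hx _ hy =>
      Finset.disjoint_iff_ne.1 hB _ (bij₁.mapsTo hx) _ (bij₂.mapsTo hy)⟩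
  refine ⟨A₁.piecewise f g, by simpa only [Finset.coe_union] using bij₁.union bij₂ inj, ?_⟩
  intro x hx
  rcases Finset.mem_union.1 hx with hx | hx
  · simpa only [eq_f x hx] using hf_coprime x hx
  · simpa only [eq_g x hx] using hg_coprime x hx

theorem image_mul_left (h : CoprimeMatching A B) (hm : 0 < m) (hB : ∀ b ∈ B, m.Coprime b) :
    CoprimeMatching (A.image (m * ·)) B := by
  obtain ⟨f, hf, hf_coprime⟩ := h
  have bij_div : Set.BijOn (· / m) (A.image (m * ·) : Finset ℕ) A := by
    have bij_mul : Set.BijOn (m * ·) A (A.image (m * ·) : Finset ℕ) := by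
      simpa only [Finset.coe_image] using
        (mul_right_injective₀ hm.ne').bijOn_image (s := (A : Set ℕ))
    have left_inv : Function.LeftInverse (· / m) (m * ·) := fun x => Nat.mul_div_cancel_left x hm
    have inv_A : Set.LeftInvOn (· / m) (m * ·) A := left_inv.leftInvOn A
    exact bij_mul.symm ⟨bij_mul.surjOn.leftInvOn_of_rightInvOn inv_A, inv_A⟩
  refine ⟨f ∘ (· / m), hf.comp bij_div, Finset.forall_mem_image.2 fun x hx => ?_⟩
  simpa only [Function.comp_apply, Nat.mul_div_cancel_left x hm] using
    Nat.Coprime.mul_left (hB _ (hf.mapsTo hx)) (hf_coprime x hx)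

end CoprimeMatching

section PrimeMul

variable {n p : ℕ}

open scoped Pointwise in
theorem divisors_prime_mul_eq_union (hp : p.Prime) (n : ℕ) :
    (p * n).divisors = n.divisors ∪ n.divisors.image (p * ·) := by
  simp only [Nat.divisors_mul, hp.divisors, Finset.insert_eq, Finset.union_mul,
    Finset.singleton_mul, Finset.smul_finset_def, smul_eq_mul, one_mul, Finset.image_id']

theorem card_divisors_prime_mul (hp : p.Prime) (hpn : ¬ p ∣ n) :
    (p * n).divisors.card = 2 * n.divisors.card := by
  rw [((hp.coprime_iff_not_dvd).2 hpn).card_divisors_mul, hp.divisors,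
    Finset.card_pair hp.ne_one.symm]

theorem disjoint_divisors_image_mul (hpn : ¬ p ∣ n) :
    Disjoint n.divisors (n.divisors.image (p * ·)) := by
  refine Finset.disjoint_right.2 (Finset.forall_mem_image.2 fun x _ hx => hpn ?_)
  exact (Nat.dvd_mul_right p x).trans (Nat.dvd_of_mem_divisors hx)

theorem CoprimeMatching.divisors_prime_mul {B C : Finset ℕ} (hB : CoprimeMatching n.divisors B)
    (hC : CoprimeMatching n.divisors C) (hp : p.Prime) (hpn : ¬ p ∣ n) (hBC : Disjoint B C)
    (hpC : ∀ c ∈ C, ¬ p ∣ c) : CoprimeMatching (p * n).divisors (B ∪ C) := by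
  rw [divisors_prime_mul_eq_union hp]
  have hC' := hC.image_mul_left hp.pos fun c hc => (hp.coprime_iff_not_dvd).2 (hpC c hc)
  exact hB.union hC' (disjoint_divisors_image_mul hpn) hBC

end PrimeMul

/-- The arithmetic progression `{a, a + d, ..., a + (k - 1) * d}` of length `k`, in the form in
which it occurs in `StronglyMatchable`. -/
def progression (a d k : ℕ) : Finset ℕ :=
  (Finset.range k).image fun i => a + i * d

section Progression

variable {a d m : ℕ}

theorem progression_add_length (a d s t : ℕ) :
    progression a d (s + t) = progression a d s ∪ progression (a + s * d) d t := by
  simp only [progression, Finset.range_add_eq_union, Finset.image_union, Finset.map_eq_image,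
    Finset.image_image, Function.comp_def, addLeftEmbedding_apply, add_mul, add_assoc]

theorem disjoint_progression_add (a s t : ℕ) (hd : 0 < d) :
    Disjoint (progression a d s) (progression (a + s * d) d t) := by
  refine Finset.disjoint_iff_ne.2 (Finset.forall_mem_image.2 fun i hi =>
    Finset.forall_mem_image.2 fun j _ => ne_of_lt ?_)
  calc a + i * d < a + s * d := by gcongr; exact Finset.mem_range.1 hi
    _ ≤ a + s * d + j * d := Nat.le_add_right _ _

theorem modEq_of_dvd_add_mul {i j : ℕ} (had : a.Coprime d) (hi : m ∣ a + i * d)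
    (hj : m ∣ a + j * d) : i ≡ j [MOD m] := by
  have hmd : m.Coprime d := (Nat.coprime_add_mul_right_left a d i |>.2 had).coprime_dvd_left hi
  have hmod : a + i * d ≡ a + j * d [MOD m] :=
    (Nat.modEq_zero_iff_dvd.2 hi).trans (Nat.modEq_zero_iff_dvd.2 hj).symm
  exact (hmod.add_left_cancel' a).cancel_right_of_coprime hmd

theorem forall_not_dvd_progression_or {s t : ℕ} (had : a.Coprime d) (hst : s + t ≤ m) :
    (∀ b ∈ progression a d s, ¬ m ∣ b) ∨ ∀ b ∈ progression (a + s * d) d t, ¬ m ∣ b := by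
  by_contra! ⟨⟨b, hb, hmb⟩, c, hc, hmc⟩
  obtain ⟨i, hi, rfl⟩ := Finset.mem_image.1 hb
  obtain ⟨j, hj, rfl⟩ := Finset.mem_image.1 hc
  rw [Finset.mem_range] at hi hj
  rw [add_assoc, ← add_mul] at hmc
  have hij : i = s + j :=
    (modEq_of_dvd_add_mul had hmb hmc).eq_of_lt_of_lt (by omega) (by omega)
  omega

end Progression

theorem stmt_18 (n p : ℕ) (hn : 0 < n) (hp : p.Prime) (hpn : ¬ p ∣ n)
    (hbig : 2 * n.divisors.card < p) (h : StronglyMatchable n) :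
    StronglyMatchable (p * n) := by
  intro a d ha hd had
  set t := n.divisors.card
  have first_half : CoprimeMatching n.divisors (progression a d t) := h a d ha hd had
  have second_half : CoprimeMatching n.divisors (progression (a + t * d) d t) :=
    h (a + t * d) d (by positivity) hd (Nat.coprime_add_mul_right_left a d t |>.2 had)
  have disjoint_halves := disjoint_progression_add a t t hd
  rw [card_divisors_prime_mul hp hpn, two_mul, ← progression, progression_add_length]
  rcases forall_not_dvd_progression_or had (by omega : t + t ≤ p) with first_free | second_free
  · rw [Finset.union_comm]
    exact second_half.divisors_prime_mul first_half hp hpn disjoint_halves.symm first_free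
  · exact first_half.divisors_prime_mul second_half hp hpn disjoint_halves second_free
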